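/- Let ψ : ℂ → ℂ be a C^∞ function with compact support. Then the following are equivalent: (a) there exists a C^∞ function v : ℂ → ℂ with compact support such that for every z ∈ ℂ, ½·((fderiv ℝ v z)(1) + i·(fderiv ℝ v z)(i)) = ψ(z) (i.e., ∂v/∂z̄ = ψ); (b) for every natural number h, ∫_ℂ z^h · ψ(z) dλ(z) = 0, where λ is Lebesgue measure on ℂ ≅ ℝ². -/

import Mathlib

open Complex MeasureTheory

/-!
If `∂v/∂z̄ = ψ` with `v` compactly supported, then `z ^ h * ψ = ∂(z ^ h * v)/∂z̄` since `z ^ h` is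
holomorphic, and the integral of a derivative of a compactly supported function is zero.
Conversely, the Cauchy transform of `ψ`, its convolution with `1 / (π z)`, solves `∂v/∂z̄ = ψ` by
the Cauchy–Pompeiu formula. Off a disc containing the support of `ψ`, its Laurent expansion at
infinity has the moments of `ψ` as coefficients, so it has compact support once they vanish.
-/

open Set Metric Function
open scoped Convolution Real ComplexConjugate

section RealDerivatives

variable {V F : Type*} [NormedAddCommGroup V] [NormedSpace ℝ V]
  [NormedAddCommGroup F] [NormedSpace ℝ F] {u : V → F}

theorem integrable_fderiv_apply [MeasurableSpace V] [BorelSpace V] {μ : Measure V}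
    [IsFiniteMeasureOnCompacts μ] (hu : ContDiff ℝ 1 u) (hus : HasCompactSupport u) (a : V) :
    Integrable (fun x ↦ fderiv ℝ u x a) μ :=
  ((hu.continuous_fderiv one_ne_zero).clm_apply continuous_const).integrable_of_hasCompactSupport
    (hus.fderiv_apply (𝕜 := ℝ) a)

theorem integral_fderiv_apply_eq_zero [FiniteDimensional ℝ V] [MeasurableSpace V] [BorelSpace V]
    {μ : Measure V} [μ.IsAddHaarMeasure] (hu : ContDiff ℝ 1 u) (hus : HasCompactSupport u)
    (a : V) : ∫ x, fderiv ℝ u x a ∂μ = 0 := by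
  simpa using integral_smul_fderiv_eq_neg_fderiv_smul_of_integrable (μ := μ) (v := a)
    (f := fun _ ↦ (1 : ℝ)) (g := u) (by simp)
    (by simpa using integrable_fderiv_apply hu hus a)
    (by simpa using hu.continuous.integrable_of_hasCompactSupport hus)
    (fun _ _ ↦ differentiableAt_const _) (fun x _ ↦ hu.differentiable one_ne_zero x)

theorem integral_Ioi_fderiv_smul_apply_eq_neg [CompleteSpace F] (hu : ContDiff ℝ 1 u)
    (hus : HasCompactSupport u) {a : V} (ha : a ≠ 0) :
    ∫ r in Ioi (0 : ℝ), fderiv ℝ u (r • a) a = -u 0 := by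
  have hderiv (r : ℝ) : deriv (fun r : ℝ ↦ u (r • a)) r = fderiv ℝ u (r • a) a := by
    have hline : HasDerivAt (fun r : ℝ ↦ r • a) a r := by
      simpa using (hasDerivAt_id r).smul_const a
    exact ((hu.differentiable one_ne_zero _).hasFDerivAt.comp_hasDerivAt r hline).deriv
  have hray : HasCompactSupport fun r : ℝ ↦ u (r • a) :=
    hus.comp_isClosedEmbedding (isClosedEmbedding_smul_left ha)
  have hsmooth : ContDiff ℝ 1 fun r : ℝ ↦ u (r • a) := hu.comp (by fun_prop)
  simpa [hderiv] using hray.integral_Ioi_deriv_eq hsmooth 0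

end RealDerivatives

variable {E : Type*} [NormedAddCommGroup E] [NormedSpace ℂ E]

/-- The Cauchy–Riemann operator `∂/∂z̄`. -/
noncomputable def dbar (v : ℂ → E) (z : ℂ) : E :=
  (1 / 2 : ℂ) • (fderiv ℝ v z 1 + I • fderiv ℝ v z I)

theorem dbar_smul {f : ℂ → ℂ} {v : ℂ → E} {z : ℂ} (hf : DifferentiableAt ℂ f z)
    (hv : DifferentiableAt ℝ v z) : dbar (fun w ↦ f w • v w) z = f z • dbar v z := by
  have hfderiv (a : ℂ) : fderiv ℝ (fun w ↦ f w • v w) z a =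
      f z • fderiv ℝ v z a + (a * deriv f z) • v z := by
    rw [((hf.hasDerivAt.hasFDerivAt.restrictScalars ℝ).fun_smul hv.hasFDerivAt).fderiv]
    simp
  simp only [dbar, hfderiv]
  linear_combination (norm := module) ((1 / 2 : ℂ) * deriv f z * I_mul_I) • v z

theorem dbar_comp_const_sub {u : ℂ → E} {z w : ℂ} (hu : DifferentiableAt ℝ u (z - w)) :
    dbar (fun w ↦ u (z - w)) w = -dbar u (z - w) := by
  have hfderiv : HasFDerivAt (fun w ↦ u (z - w)) (-fderiv ℝ u (z - w)) w := by
    simpa using! hu.hasFDerivAt.comp w ((hasFDerivAt_id w).const_sub z)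
  simp only [dbar, hfderiv.fderiv, neg_apply]
  module

theorem integral_dbar_eq_zero {v : ℂ → E} (hv : ContDiff ℝ 1 v) (hvs : HasCompactSupport v) :
    ∫ z, dbar v z = 0 := by
  simp only [dbar]
  rw [integral_smul, integral_add (integrable_fderiv_apply hv hvs 1)
    ((integrable_fderiv_apply hv hvs I).fun_smul I), integral_smul,
    integral_fderiv_apply_eq_zero hv hvs, integral_fderiv_apply_eq_zero hv hvs]
  simp

theorem integral_smul_dbar_eq_zero {f : ℂ → ℂ} {v : ℂ → E} (hf : Differentiable ℂ f)
    (hv : ContDiff ℝ 1 v) (hvs : HasCompactSupport v) : ∫ z, f z • dbar v z = 0 := by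
  have hfv : ContDiff ℝ 1 fun z ↦ f z • v z := (hf.contDiff.restrict_scalars ℝ).smul hv
  simpa only [dbar_smul (hf _) (hv.differentiable one_ne_zero _)] using
    integral_dbar_eq_zero hfv hvs.smul_left

section CauchyPompeiu

theorem map_add_I_smul_map_mul_I (L : ℂ →L[ℝ] E) (w : ℂ) :
    L w + I • L (w * I) = conj w • (L 1 + I • L I) := by
  have hL (x : ℂ) : L x = x.re • L 1 + x.im • L I := by
    rw [← map_smul, ← map_smul, ← map_add]
    simp
  have hconj : conj w = w.re - w.im * I := by apply Complex.ext <;> simp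
  rw [hL w, hL (w * I), hconj]
  simp only [mul_I_re, mul_I_im, ← coe_smul, ofReal_neg]
  linear_combination (norm := module) ((w.im : ℂ) * I_mul_I) • L I

/-- The fundamental solution `1 / (π z)` of `∂/∂z̄`, with value `0` at the origin. -/
noncomputable def cauchyKernel (z : ℂ) : ℂ := (π * z)⁻¹

theorem smul_cauchyKernel_smul_dbar_circleMap (u : ℂ → E) {r : ℝ} (hr : r ≠ 0) (θ : ℝ) :
    r • cauchyKernel (circleMap 0 r θ) • dbar u (circleMap 0 r θ) =
      (2 * π)⁻¹ • (fderiv ℝ u (circleMap 0 r θ) (circleMap 0 1 θ) +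
        I • fderiv ℝ u (circleMap 0 r θ) (circleMap 0 1 θ * I)) := by
  have hker : (r : ℂ) * cauchyKernel (circleMap 0 r θ) = (π : ℂ)⁻¹ * circleMap 0 1 (-θ) := by
    have hr' : (r : ℂ) ≠ 0 := ofReal_ne_zero.2 hr
    simp only [cauchyKernel, circleMap_zero, ofReal_neg, neg_mul, Complex.exp_neg, ofReal_one]
    field_simp
  rw [map_add_I_smul_map_mul_I, conj_circleMap_zero, dbar, ← coe_smul, smul_smul, smul_smul,
    hker, ← coe_smul, smul_smul]
  push_cast
  congr 1
  ring

variable {u : ℂ → E}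

theorem integrableOn_polarCoord_target_fderiv_apply (hu : ContDiff ℝ 1 u)
    (hus : HasCompactSupport u) {a : ℝ × ℝ → ℂ} (ha : Continuous a) :
    IntegrableOn (fun p : ℝ × ℝ ↦ fderiv ℝ u (circleMap 0 p.1 p.2) (a p)) polarCoord.target := by
  obtain ⟨R, hR⟩ := (hus.fderiv (𝕜 := ℝ)).isCompact.isBounded.subset_closedBall 0
  have hcont : Continuous fun p : ℝ × ℝ ↦ fderiv ℝ u (circleMap 0 p.1 p.2) (a p) :=
    ((hu.continuous_fderiv one_ne_zero).comp (by unfold circleMap; fun_prop)).clm_apply ha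
  have hrect : IntegrableOn (fun p : ℝ × ℝ ↦ fderiv ℝ u (circleMap 0 p.1 p.2) (a p))
      (Icc 0 R ×ˢ Icc (-π) π) :=
    hcont.continuousOn.integrableOn_compact (isCompact_Icc.prod isCompact_Icc)
  refine hrect.of_forall_sdiff_eq_zero polarCoord.open_target.measurableSet ?_
  rintro ⟨r, θ⟩ ⟨⟨hr, hθ⟩, hout⟩
  have hRr : R < r := not_le.1 fun hrR ↦ hout ⟨⟨le_of_lt hr, hrR⟩, Ioo_subset_Icc_self hθ⟩
  have hnotMem : circleMap 0 r θ ∉ tsupport (fderiv ℝ u) := fun h ↦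
    (hRr.trans_le (le_abs_self r)).not_ge (by simpa using hR h)
  simp [image_eq_zero_of_notMem_tsupport hnotMem]

variable [CompleteSpace E]

theorem integral_polarCoord_target_fderiv_radial (hu : ContDiff ℝ 1 u)
    (hus : HasCompactSupport u) :
    ∫ p in polarCoord.target, fderiv ℝ u (circleMap 0 p.1 p.2) (circleMap 0 1 p.2) =
      -(2 * π) • u 0 := by
  have hint := integrableOn_polarCoord_target_fderiv_apply hu hus
    (a := fun p ↦ circleMap 0 1 p.2) (by fun_prop)
  have hray (θ : ℝ) :
      ∫ r in Ioi (0 : ℝ), fderiv ℝ u (circleMap 0 r θ) (circleMap 0 1 θ) = -u 0 := by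
    simpa [circleMap_zero] using
      integral_Ioi_fderiv_smul_apply_eq_neg hu hus (circleMap_ne_center (c := 0) one_ne_zero)
  rw [IntegrableOn, polarCoord_target, Measure.volume_eq_prod, ← Measure.prod_restrict] at hint
  rw [polarCoord_target, Measure.volume_eq_prod, ← Measure.prod_restrict,
    integral_prod_symm _ hint]
  simp only [hray, setIntegral_const, Real.volume_real_Ioo_of_le (neg_le_self Real.pi_pos.le)]
  module

theorem integral_fderiv_circleMap_tangent_eq_zero (hu : ContDiff ℝ 1 u) {r : ℝ} (hr : r ≠ 0) :
    ∫ θ in -π..π, fderiv ℝ u (circleMap 0 r θ) (circleMap 0 1 θ * I) = 0 := by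
  have hderiv (θ : ℝ) : HasDerivAt (fun θ ↦ u (circleMap 0 r θ))
      (r • fderiv ℝ u (circleMap 0 r θ) (circleMap 0 1 θ * I)) θ := by
    refine ((hu.differentiable one_ne_zero _).hasFDerivAt.comp_hasDerivAt θ
      (hasDerivAt_circleMap 0 r θ)).congr_deriv ?_
    rw [← map_smul]
    simp [circleMap_zero, mul_assoc]
  have hcont : Continuous fun θ ↦ r • fderiv ℝ u (circleMap 0 r θ) (circleMap 0 1 θ * I) :=
    (((hu.continuous_fderiv one_ne_zero).comp (by fun_prop)).clm_apply
      (by fun_prop)).const_smul r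
  have hperiod : circleMap 0 r π = circleMap 0 r (-π) := by simp [circleMap_zero]
  have hftc := intervalIntegral.integral_eq_sub_of_hasDerivAt (fun θ _ ↦ hderiv θ)
    (hcont.intervalIntegrable (-π) π)
  rw [intervalIntegral.integral_smul, hperiod, sub_self] at hftc
  exact (smul_eq_zero.1 hftc).resolve_left hr

theorem integral_polarCoord_target_fderiv_tangent (hu : ContDiff ℝ 1 u)
    (hus : HasCompactSupport u) :
    ∫ p in polarCoord.target, fderiv ℝ u (circleMap 0 p.1 p.2) (circleMap 0 1 p.2 * I) = 0 := by
  have hint := integrableOn_polarCoord_target_fderiv_apply hu hus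
    (a := fun p ↦ circleMap 0 1 p.2 * I) (by fun_prop)
  rw [polarCoord_target, Measure.volume_eq_prod] at hint ⊢
  rw [setIntegral_prod _ hint]
  refine setIntegral_eq_zero_of_forall_eq_zero fun r hr ↦ ?_
  rw [← integral_Ioc_eq_integral_Ioo,
    ← intervalIntegral.integral_of_le (neg_le_self Real.pi_pos.le)]
  exact integral_fderiv_circleMap_tangent_eq_zero hu (ne_of_gt hr)

theorem integral_cauchyKernel_smul_dbar (hu : ContDiff ℝ 1 u) (hus : HasCompactSupport u) :
    ∫ w, cauchyKernel w • dbar u w = -u 0 := by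
  have hradial := integrableOn_polarCoord_target_fderiv_apply hu hus
    (a := fun p ↦ circleMap 0 1 p.2) (by fun_prop)
  have htangent := integrableOn_polarCoord_target_fderiv_apply hu hus
    (a := fun p ↦ circleMap 0 1 p.2 * I) (by fun_prop)
  have hsymm (p : ℝ × ℝ) : Complex.polarCoord.symm p = circleMap 0 p.1 p.2 := by
    rw [Complex.polarCoord_symm_apply, circleMap_zero, exp_mul_I, ofReal_cos, ofReal_sin]
  calc ∫ w, cauchyKernel w • dbar u w
    _ = ∫ p in polarCoord.target, p.1 • cauchyKernel (circleMap 0 p.1 p.2) •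
          dbar u (circleMap 0 p.1 p.2) := by
      simp only [← Complex.integral_comp_polarCoord_symm (fun w ↦ cauchyKernel w • dbar u w), hsymm]
    _ = ∫ p in polarCoord.target, (2 * π)⁻¹ •
          (fderiv ℝ u (circleMap 0 p.1 p.2) (circleMap 0 1 p.2) +
            I • fderiv ℝ u (circleMap 0 p.1 p.2) (circleMap 0 1 p.2 * I)) :=
      setIntegral_congr_fun polarCoord.open_target.measurableSet fun p hp ↦
        smul_cauchyKernel_smul_dbar_circleMap u (ne_of_gt hp.1) p.2
    _ = (2 * π)⁻¹ • (-(2 * π) • u 0 + I • 0) := by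
      rw [integral_smul, integral_add hradial (htangent.fun_smul I), integral_smul,
        integral_polarCoord_target_fderiv_radial hu hus,
        integral_polarCoord_target_fderiv_tangent hu hus]
    _ = -u 0 := by
      rw [smul_zero, add_zero, neg_smul, smul_neg, inv_smul_smul₀ Real.two_pi_pos.ne']

end CauchyPompeiu

section CauchyTransform

theorem locallyIntegrable_cauchyKernel : LocallyIntegrable cauchyKernel := by
  refine locallyIntegrable_of_norm_le_rpow (C := π⁻¹) (α := 1) (by simp) (by simp)
    (ae_of_all _ fun z ↦ ?_)
    (measurable_const.mul measurable_id).inv.aestronglyMeasurable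
  simp [cauchyKernel, Real.rpow_neg_one, abs_of_pos Real.pi_pos, mul_comm]

/-- The Cauchy transform `z ↦ π⁻¹ ∫ ψ w / (z - w)` of `ψ`. -/
noncomputable def cauchyTransform (ψ : ℂ → E) : ℂ → E :=
  cauchyKernel ⋆[ContinuousLinearMap.lsmul ℝ ℂ] ψ

variable {ψ : ℂ → E}

theorem cauchyTransform_apply (ψ : ℂ → E) (z : ℂ) :
    cauchyTransform ψ z = ∫ w, cauchyKernel w • ψ (z - w) :=
  rfl

theorem contDiff_cauchyTransform {n : ℕ∞} (hψ : ContDiff ℝ n ψ) (hsupp : HasCompactSupport ψ) :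
    ContDiff ℝ n (cauchyTransform ψ) :=
  hsupp.contDiff_convolution_right _ locallyIntegrable_cauchyKernel hψ

theorem fderiv_cauchyTransform_apply (hψ : ContDiff ℝ 1 ψ) (hsupp : HasCompactSupport ψ)
    (z a : ℂ) :
    fderiv ℝ (cauchyTransform ψ) z a = cauchyTransform (fun w ↦ fderiv ℝ ψ w a) z := by
  unfold cauchyTransform
  rw [(hsupp.hasFDerivAt_convolution_right _ locallyIntegrable_cauchyKernel hψ z).fderiv,
    convolution_precompR_apply _ locallyIntegrable_cauchyKernel (hsupp.fderiv (𝕜 := ℝ))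
      (hψ.continuous_fderiv one_ne_zero)]

theorem dbar_cauchyTransform_eq_cauchyTransform_dbar (hψ : ContDiff ℝ 1 ψ)
    (hsupp : HasCompactSupport ψ) (z : ℂ) :
    dbar (cauchyTransform ψ) z = cauchyTransform (dbar ψ) z := by
  have hint (a : ℂ) : Integrable fun w ↦ cauchyKernel w • fderiv ℝ ψ (z - w) a :=
    (hsupp.fderiv_apply (𝕜 := ℝ) a).convolutionExists_right (ContinuousLinearMap.lsmul ℝ ℂ)
      locallyIntegrable_cauchyKernel
      ((hψ.continuous_fderiv one_ne_zero).clm_apply continuous_const) z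
  rw [dbar, fderiv_cauchyTransform_apply hψ hsupp, fderiv_cauchyTransform_apply hψ hsupp]
  simp only [cauchyTransform_apply, dbar]
  rw [← integral_smul, ← integral_add (hint 1) ((hint I).fun_smul I), ← integral_smul]
  simp only [smul_add, smul_comm (cauchyKernel _)]

theorem cauchyTransform_dbar [CompleteSpace E] {u : ℂ → E} (hu : ContDiff ℝ 1 u)
    (hus : HasCompactSupport u) (z : ℂ) : cauchyTransform (dbar u) z = u z := by
  have hpompeiu := integral_cauchyKernel_smul_dbar (u := fun w ↦ u (z - w))
    (hu.comp (contDiff_const.sub contDiff_id)) (hus.comp_homeomorph (Homeomorph.subLeft z))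
  rw [cauchyTransform_apply]
  simpa only [dbar_comp_const_sub (hu.differentiable one_ne_zero _), smul_neg,
    integral_neg, neg_inj, sub_zero] using hpompeiu

theorem dbar_cauchyTransform [CompleteSpace E] (hψ : ContDiff ℝ 1 ψ) (hsupp : HasCompactSupport ψ)
    (z : ℂ) : dbar (cauchyTransform ψ) z = ψ z := by
  rw [dbar_cauchyTransform_eq_cauchyTransform_dbar hψ hsupp, cauchyTransform_dbar hψ hsupp]

end CauchyTransform

section LaurentExpansion

theorem hasSum_inv_pow_succ_mul_pow {K : Type*} [NormedField K] {z w : K} (h : ‖w‖ < ‖z‖) :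
    HasSum (fun n : ℕ ↦ (z ^ (n + 1))⁻¹ * w ^ n) (z - w)⁻¹ := by
  have hz : z ≠ 0 := norm_pos_iff.1 ((norm_nonneg w).trans_lt h)
  have hratio : ‖w / z‖ < 1 := by
    rwa [norm_div, div_lt_one (norm_pos_iff.2 hz)]
  convert! (hasSum_geometric_of_norm_lt_one hratio).mul_left z⁻¹ using 1
  · ext n
    rw [div_pow, pow_succ', mul_inv, mul_assoc, div_eq_inv_mul]
  · rw [← mul_inv, mul_sub, mul_one, mul_div_cancel₀ _ hz]

variable {ψ : ℂ → E} {R : ℝ}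

theorem hasSum_integral_inv_sub_smul (hψ : Integrable ψ) (hR : 0 ≤ R)
    (hsupp : support ψ ⊆ closedBall 0 R) {z : ℂ} (hz : R < ‖z‖) :
    HasSum (fun n : ℕ ↦ (z ^ (n + 1))⁻¹ • ∫ w, w ^ n • ψ w) (∫ w, (z - w)⁻¹ • ψ w) := by
  have hz0 : 0 < ‖z‖ := hR.trans_lt hz
  simp only [← integral_smul]
  refine hasSum_integral_of_dominated_convergence
    (fun n w ↦ (R / ‖z‖) ^ n * (‖z‖⁻¹ * ‖ψ w‖))
    (fun n ↦ ?_) (fun n ↦ ae_of_all _ fun w ↦ ?_)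
    (ae_of_all _ fun w ↦ (summable_geometric_of_lt_one (by positivity)
      ((div_lt_one hz0).2 hz)).mul_right _) ?_ (ae_of_all _ fun w ↦ ?_)
  · exact (((by fun_prop : Continuous fun w : ℂ ↦ w ^ n).aestronglyMeasurable.smul
      hψ.aestronglyMeasurable).const_smul _)
  · by_cases hw : ψ w = 0
    · simp [hw]
    have hwR : ‖w‖ ≤ R := mem_closedBall_zero_iff.1 (hsupp hw)
    calc ‖(z ^ (n + 1))⁻¹ • w ^ n • ψ w‖
      _ = (‖w‖ / ‖z‖) ^ n * (‖z‖⁻¹ * ‖ψ w‖) := by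
        simp only [norm_smul, norm_inv, norm_pow]
        rw [div_pow, pow_succ]
        field_simp
      _ ≤ (R / ‖z‖) ^ n * (‖z‖⁻¹ * ‖ψ w‖) := by gcongr
  · simp only [tsum_mul_right]
    exact (hψ.norm.const_mul _).const_mul _
  · by_cases hw : ψ w = 0
    · simp [hw]
    have hwR : ‖w‖ ≤ R := mem_closedBall_zero_iff.1 (hsupp hw)
    simpa only [smul_smul] using
      (hasSum_inv_pow_succ_mul_pow (hwR.trans_lt hz)).smul_const (ψ w)

theorem cauchyTransform_eq_zero_of_moments (hψ : Integrable ψ) (hR : 0 ≤ R)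
    (hsupp : support ψ ⊆ closedBall 0 R) (hmoments : ∀ h : ℕ, ∫ w, w ^ h • ψ w = 0) {z : ℂ}
    (hz : R < ‖z‖) : cauchyTransform ψ z = 0 := by
  have hsum := hasSum_integral_inv_sub_smul hψ hR hsupp hz
  simp only [hmoments, smul_zero] at hsum
  calc cauchyTransform ψ z
    _ = ∫ w, cauchyKernel (z - w) • ψ w := convolution_eq_swap _
    _ = (π : ℂ)⁻¹ • ∫ w, (z - w)⁻¹ • ψ w := by
      simp only [cauchyKernel, mul_inv, mul_smul, integral_smul]
    _ = 0 := by rw [hsum.unique hasSum_zero, smul_zero]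

theorem hasCompactSupport_cauchyTransform_of_moments (hψ : Integrable ψ)
    (hsupp : HasCompactSupport ψ) (hmoments : ∀ h : ℕ, ∫ w, w ^ h • ψ w = 0) :
    HasCompactSupport (cauchyTransform ψ) := by
  obtain ⟨R, hR, hball⟩ := hsupp.isCompact.isBounded.subset_closedBall_lt 0 0
  refine HasCompactSupport.intro (isCompact_closedBall (0 : ℂ) R) fun z hz ↦ ?_
  exact cauchyTransform_eq_zero_of_moments hψ hR.le ((subset_tsupport ψ).trans hball) hmoments
    (by simpa using hz)

end LaurentExpansion

theorem statement3_general [CompleteSpace E] {n : ℕ∞} (hn : 1 ≤ n) {ψ : ℂ → E}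
    (hψ : ContDiff ℝ n ψ) (hsupp : HasCompactSupport ψ) :
    (∃ v : ℂ → E, ContDiff ℝ n v ∧ HasCompactSupport v ∧ ∀ z, dbar v z = ψ z) ↔
      ∀ h : ℕ, ∫ z, z ^ h • ψ z = 0 := by
  have one_le : (1 : WithTop ℕ∞) ≤ n := by exact_mod_cast hn
  constructor
  · rintro ⟨v, hv, hvs, hdbar⟩ h
    simpa only [hdbar] using integral_smul_dbar_eq_zero (differentiable_pow h) (hv.of_le one_le) hvs
  · intro hmoments
    exact ⟨cauchyTransform ψ, contDiff_cauchyTransform hψ hsupp,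
      hasCompactSupport_cauchyTransform_of_moments
        (hψ.continuous.integrable_of_hasCompactSupport hsupp) hsupp hmoments,
      dbar_cauchyTransform (hψ.of_le one_le) hsupp⟩

/-- Moment criterion for compactly supported solvability of `∂v/∂z̄ = ψ` in one complex
variable: a smooth compactly supported `ψ : ℂ → ℂ` is `∂/∂z̄` of a smooth compactly supported
function if and only if all the moments `∫ z^h ψ(z) dλ(z)` vanish. -/
theorem statement3 (ψ : ℂ → ℂ) (hψ : ContDiff ℝ (⊤ : ℕ∞) ψ) (hsupp : HasCompactSupport ψ) :
    (∃ v : ℂ → ℂ, ContDiff ℝ (⊤ : ℕ∞) v ∧ HasCompactSupport v ∧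
      ∀ z : ℂ, (1 / 2 : ℂ) * (fderiv ℝ v z 1 + Complex.I * fderiv ℝ v z Complex.I) = ψ z) ↔
    (∀ h : ℕ, ∫ z : ℂ, z ^ h * ψ z = 0) :=
  statement3_general le_top hψ hsupp
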